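/- Let g : ℝ² → ℝ be smooth and nowhere zero, let v : ℝ² → ℝ be smooth, let c₁, c₂ : ℝ → ℝ be smooth with c₁ and c₂ nowhere zero, and define f(x,t) = c₁(t) / g(x,t)² and γ(x,t) = g_t(x,t)/g(x,t) − (1/2) c₂'(t)/c₂(t). Suppose that at every point of ℝ² the condition f g³ (f_t (g_t − 2 g γ) − f_tt g) + f_t² g⁴ + 2 f³ g³ (g v_xx − gₓ vₓ) + f² g² (g (4 g_t γ + g_tt) − 2 g_t² − 2 g² (γ_t + 2 γ²)) + f⁴ (36 gₓ⁴ − 48 g g_xx gₓ² + 10 g² g_xxx gₓ + g² (6 g_xx² − g g_xxxx)) = 0 holds. Then there exist smooth functions p₁, p₂, f₁, f₇, g₁, g₁₃ : ℝ² → ℂ satisfying, at every point of ℝ²: (KC1) f₁_t − g₁ₓ = 0; (KC2) f₇_t − g₁₃ₓ = 0; (KC3) i p₁_t − i p₁(g₁ − g₁₃ − i v + γ) − (f p₁)_xx + 2(f₁ − f₇)(p₁ f)ₓ − f p₁(f₁ − f₇)² + f p₁(f₁ − f₇)ₓ = 0; (KC4) i p₂_t + i p₂(g₁ − g₁₃ −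 i v − γ) + (f p₂)_xx + 2(f₁ − f₇)(f p₂)ₓ + (f₁ − f₇)² f p₂ + f p₂(f₁ − f₇)ₓ = 0; (KC5) fₓ p₁ p₂ + 2(f p₁ p₂)ₓ = 0; (KC6) g + 2 f p₁ p₂ = 0. Consequently the variable-coefficient NLS equation i q_t + f q_xx + g |q|² q + v q + i γ q = 0 with these coefficients is Lax-integrable. -/

import Mathlib

open Complex

/-- Partial derivative in the first (spatial) variable. -/
noncomputable def Dx {E : Type*} [NormedAddCommGroup E] [NormedSpace ℝ E]
    (F : ℝ × ℝ → E) : ℝ × ℝ → E := fun p => fderiv ℝ F p (1, 0)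

/-- Partial derivative in the second (temporal) variable. -/
noncomputable def Dt {E : Type*} [NormedAddCommGroup E] [NormedSpace ℝ E]
    (F : ℝ × ℝ → E) : ℝ × ℝ → E := fun p => fderiv ℝ F p (0, 1)

/-!
Take `p₁ = 1/f` and `p₂ = -g/2`, which settles (KC5) and (KC6), and `f₇ = g₁₃ = 0`. Then (KC3)
determines `g₁`, and the real part of (KC4) holds when `Re f₁ = ½ ∂ₓ log |g|`; by the symmetry of
second derivatives this also gives the real part of (KC1). Writing `ξ = Im f₁ = c₂ g U / c₁`, the
imaginary parts of (KC4) and (KC1) prescribe `U_x` and `U_t` as explicit functions `P` and `Q` of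
the coefficients, and the hypothesis is, up to a nonvanishing factor, the compatibility condition
`Q_x = P_t`. The Poincaré lemma on the plane then provides `U`.
-/

section Calculus

variable {E A 𝕜 : Type*} [NormedAddCommGroup E] [NormedSpace ℝ E]
  [NormedCommRing A] [NormedAlgebra ℝ A] [NormedField 𝕜] [NormedAlgebra ℝ 𝕜]

@[fun_prop]
theorem contDiff_Dx {F : ℝ × ℝ → E} (hF : ContDiff ℝ (⊤ : ℕ∞) F) :
    ContDiff ℝ (⊤ : ℕ∞) (Dx F) :=
  (hF.fderiv_right (by simp)).clm_apply contDiff_const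

@[fun_prop]
theorem contDiff_Dt {F : ℝ × ℝ → E} (hF : ContDiff ℝ (⊤ : ℕ∞) F) :
    ContDiff ℝ (⊤ : ℕ∞) (Dt F) :=
  (hF.fderiv_right (by simp)).clm_apply contDiff_const

@[fun_prop]
theorem contDiff_complex_ofReal {n : WithTop ℕ∞} {F : E → ℝ} (hF : ContDiff ℝ n F) :
    ContDiff ℝ n (fun p => (F p : ℂ)) :=
  ofRealCLM.contDiff.comp hF

@[fun_prop]
theorem differentiable_div {F G : E → 𝕜} (hF : Differentiable ℝ F) (hG : Differentiable ℝ G)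
    (hG₀ : ∀ p, G p ≠ 0) : Differentiable ℝ (fun p => F p / G p) := by
  simpa only [div_eq_mul_inv] using hF.fun_mul (hG.fun_inv hG₀)

theorem Dx_const (c : E) : Dx (fun _ => c) = fun _ => 0 := by
  ext p
  simp [Dx]

theorem Dt_const (c : E) : Dt (fun _ => c) = fun _ => 0 := by
  ext p
  simp [Dt]

theorem Dx_neg {F : ℝ × ℝ → E} : Dx (fun p => -F p) = fun p => -Dx F p := by
  ext p
  simp [Dx, fderiv_fun_neg]

theorem Dx_add {F G : ℝ × ℝ → E} (hF : Differentiable ℝ F) (hG : Differentiable ℝ G) :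
    Dx (fun p => F p + G p) = fun p => Dx F p + Dx G p := by
  ext p
  simp [Dx, fderiv_fun_add (hF p) (hG p)]

theorem Dt_add {F G : ℝ × ℝ → E} (hF : Differentiable ℝ F) (hG : Differentiable ℝ G) :
    Dt (fun p => F p + G p) = fun p => Dt F p + Dt G p := by
  ext p
  simp [Dt, fderiv_fun_add (hF p) (hG p)]

theorem Dx_sub {F G : ℝ × ℝ → E} (hF : Differentiable ℝ F) (hG : Differentiable ℝ G) :
    Dx (fun p => F p - G p) = fun p => Dx F p - Dx G p := by
  ext p
  simp [Dx, fderiv_fun_sub (hF p) (hG p)]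

theorem Dt_sub {F G : ℝ × ℝ → E} (hF : Differentiable ℝ F) (hG : Differentiable ℝ G) :
    Dt (fun p => F p - G p) = fun p => Dt F p - Dt G p := by
  ext p
  simp [Dt, fderiv_fun_sub (hF p) (hG p)]

theorem Dx_mul {F G : ℝ × ℝ → A} (hF : Differentiable ℝ F) (hG : Differentiable ℝ G) :
    Dx (fun p => F p * G p) = fun p => F p * Dx G p + G p * Dx F p := by
  ext p
  simp [Dx, fderiv_fun_mul (hF p) (hG p)]

theorem Dt_mul {F G : ℝ × ℝ → A} (hF : Differentiable ℝ F) (hG : Differentiable ℝ G) :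
    Dt (fun p => F p * G p) = fun p => F p * Dt G p + G p * Dt F p := by
  ext p
  simp [Dt, fderiv_fun_mul (hF p) (hG p)]

theorem Dx_const_mul {F : ℝ × ℝ → A} (a : A) (hF : Differentiable ℝ F) :
    Dx (fun p => a * F p) = fun p => a * Dx F p := by
  ext p
  simp [Dx, fderiv_const_mul (hF p)]

theorem Dt_const_mul {F : ℝ × ℝ → A} (a : A) (hF : Differentiable ℝ F) :
    Dt (fun p => a * F p) = fun p => a * Dt F p := by
  ext p
  simp [Dt, fderiv_const_mul (hF p)]

theorem Dx_pow {F : ℝ × ℝ → A} (n : ℕ) (hF : Differentiable ℝ F) :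
    Dx (fun p => F p ^ n) = fun p => n * F p ^ (n - 1) * Dx F p := by
  ext p
  simp [Dx, fderiv_fun_pow n (hF p)]

theorem Dt_pow {F : ℝ × ℝ → A} (n : ℕ) (hF : Differentiable ℝ F) :
    Dt (fun p => F p ^ n) = fun p => n * F p ^ (n - 1) * Dt F p := by
  ext p
  simp [Dt, fderiv_fun_pow n (hF p)]

theorem Dx_div {F G : ℝ × ℝ → 𝕜} (hF : Differentiable ℝ F) (hG : Differentiable ℝ G)
    (hG₀ : ∀ p, G p ≠ 0) :
    Dx (fun p => F p / G p) = fun p => (Dx F p * G p - F p * Dx G p) / G p ^ 2 := by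
  ext p
  have hprod := congrFun (Dx_mul (differentiable_div hF hG hG₀) hG) p
  simp only [div_mul_cancel₀ _ (hG₀ _)] at hprod
  rw [hprod]
  field [hG₀ p]

theorem Dt_div {F G : ℝ × ℝ → 𝕜} (hF : Differentiable ℝ F) (hG : Differentiable ℝ G)
    (hG₀ : ∀ p, G p ≠ 0) :
    Dt (fun p => F p / G p) = fun p => (Dt F p * G p - F p * Dt G p) / G p ^ 2 := by
  ext p
  have hprod := congrFun (Dt_mul (differentiable_div hF hG hG₀) hG) p
  simp only [div_mul_cancel₀ _ (hG₀ _)] at hprod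
  rw [hprod]
  field [hG₀ p]

theorem Dx_ofReal {F : ℝ × ℝ → ℝ} (hF : Differentiable ℝ F) :
    Dx (fun p => (F p : ℂ)) = fun p => ((Dx F p : ℝ) : ℂ) := by
  ext p
  exact congrArg (· (1, 0)) (ofRealCLM.hasFDerivAt.comp p (hF p).hasFDerivAt).fderiv

theorem Dt_ofReal {F : ℝ × ℝ → ℝ} (hF : Differentiable ℝ F) :
    Dt (fun p => (F p : ℂ)) = fun p => ((Dt F p : ℝ) : ℂ) := by
  ext p
  exact congrArg (· (0, 1)) (ofRealCLM.hasFDerivAt.comp p (hF p).hasFDerivAt).fderiv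

theorem Dx_ofReal_add_I_mul {F G : ℝ × ℝ → ℝ} (hF : Differentiable ℝ F)
    (hG : Differentiable ℝ G) :
    Dx (fun p => (F p : ℂ) + I * (G p : ℂ)) =
      fun p => ((Dx F p : ℝ) : ℂ) + I * ((Dx G p : ℝ) : ℂ) := by
  simp (disch := fun_prop) only [Dx_add, Dx_const_mul, Dx_ofReal]

theorem Dt_ofReal_add_I_mul {F G : ℝ × ℝ → ℝ} (hF : Differentiable ℝ F)
    (hG : Differentiable ℝ G) :
    Dt (fun p => (F p : ℂ) + I * (G p : ℂ)) =
      fun p => ((Dt F p : ℝ) : ℂ) + I * ((Dt G p : ℝ) : ℂ) := by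
  simp (disch := fun_prop) only [Dt_add, Dt_const_mul, Dt_ofReal]

theorem Dx_comp_snd {c : ℝ → E} (hc : Differentiable ℝ c) :
    Dx (fun p : ℝ × ℝ => c p.2) = fun _ => 0 := by
  ext p
  have hcomp := (hc p.2).hasFDerivAt.comp p (hasFDerivAt_snd (𝕜 := ℝ))
  simpa [Dx, Function.comp_def] using congrArg (· (1, 0)) hcomp.fderiv

theorem Dt_comp_snd {c : ℝ → E} (hc : Differentiable ℝ c) :
    Dt (fun p : ℝ × ℝ => c p.2) = fun p => deriv c p.2 := by
  ext p
  have hcomp := (hc p.2).hasFDerivAt.comp p (hasFDerivAt_snd (𝕜 := ℝ))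
  simpa [Dt, Function.comp_def] using congrArg (· (0, 1)) hcomp.fderiv

theorem fderiv_clm_apply_const {V W : Type*} [NormedAddCommGroup V] [NormedSpace ℝ V]
    [NormedAddCommGroup W] [NormedSpace ℝ W] {L : V → W →L[ℝ] E} {p : V}
    (hL : DifferentiableAt ℝ L p) (w : W) (u : V) :
    fderiv ℝ (fun q => L q w) p u = fderiv ℝ L p u w := by
  simp [fderiv_clm_apply hL (differentiableAt_const w)]

theorem Dt_Dx_comm {F : ℝ × ℝ → E} (hF : ContDiff ℝ 2 F) : Dt (Dx F) = Dx (Dt F) := by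
  ext p
  have hF' : DifferentiableAt ℝ (fderiv ℝ F) p :=
    (hF.fderiv_right (m := 1) (by norm_num)).differentiable (by simp) p
  have hsymm : IsSymmSndFDerivAt ℝ F p := hF.contDiffAt.isSymmSndFDerivAt (by simp)
  exact ((fderiv_clm_apply_const hF' _ _).trans (hsymm _ _)).trans
    (fderiv_clm_apply_const hF' _ _).symm

theorem exists_Dx_eq_Dt_eq [CompleteSpace E] {P Q : ℝ × ℝ → E} (hP : ContDiff ℝ (⊤ : ℕ∞) P)
    (hQ : ContDiff ℝ (⊤ : ℕ∞) Q) (hPQ : Dt P = Dx Q) :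
    ∃ U : ℝ × ℝ → E, ContDiff ℝ (⊤ : ℕ∞) U ∧ Dx U = P ∧ Dt U = Q := by
  let ω : ℝ × ℝ → ℝ × ℝ →L[ℝ] E := fun p =>
    (ContinuousLinearMap.fst ℝ ℝ ℝ).smulRight (P p) +
      (ContinuousLinearMap.snd ℝ ℝ ℝ).smulRight (Q p)
  have hω : ContDiff ℝ (⊤ : ℕ∞) ω :=
    (contDiff_const.smulRight hP).add (contDiff_const.smulRight hQ)
  have hω' (p u w : ℝ × ℝ) :
      fderiv ℝ ω p u w = w.1 • fderiv ℝ P p u + w.2 • fderiv ℝ Q p u := by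
    have hPp := hP.differentiable (by simp) p
    have hQp := hQ.differentiable (by simp) p
    rw [← fderiv_clm_apply_const (hω.differentiable (by simp) p)]
    simp [ω, fderiv_fun_add (hPp.fun_const_smul _) (hQp.fun_const_smul _),
      fderiv_fun_const_smul hPp, fderiv_fun_const_smul hQp]
  have hcoord (L : ℝ × ℝ →L[ℝ] E) (u : ℝ × ℝ) : L u = u.1 • L (1, 0) + u.2 • L (0, 1) := by
    rw [← map_smul, ← map_smul, ← map_add]
    simp
  have hclosed (p u w : ℝ × ℝ) : fderiv ℝ ω p u w = fderiv ℝ ω p w u := by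
    have hPQp : fderiv ℝ P p (0, 1) = fderiv ℝ Q p (1, 0) := congrFun hPQ p
    rw [hω', hω', hcoord (fderiv ℝ P p) u, hcoord (fderiv ℝ P p) w, hcoord (fderiv ℝ Q p) u,
      hcoord (fderiv ℝ Q p) w, hPQp]
    module
  obtain ⟨U, hU⟩ := convex_univ.exists_forall_hasFDerivAt_of_fderiv_symmetric isOpen_univ
    (hω.differentiable (by simp)).differentiableOn fun p _ => hclosed p
  have hfderiv : fderiv ℝ U = ω := funext fun p => (hU p trivial).fderiv
  refine ⟨U, contDiff_infty_iff_fderiv.2 ⟨fun p => (hU p trivial).differentiableAt, ?_⟩, ?_, ?_⟩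
  · exact hfderiv ▸ hω
  · ext p
    simp [Dx, hfderiv, ω]
  · ext p
    simp [Dt, hfderiv, ω]

end Calculus

section ReciprocalAnsatz

variable {f g v γ : ℝ × ℝ → ℝ} {f₁ f₇ g₁ g₁₃ : ℝ × ℝ → ℂ} {p : ℝ × ℝ}

/-- The value of `g₁ − g₁₃` that (KC3) forces when `p₁ = 1/f` and `f₁ − f₇ = a`. -/
noncomputable def timeCoeff (f v γ : ℝ × ℝ → ℝ) (a : ℝ × ℝ → ℂ) : ℝ × ℝ → ℂ := fun p =>
  -(Dt f p / f p + γ p) + I * (v p + f p * (a p ^ 2 - Dx a p))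

theorem kc3_iff_sub_eq_timeCoeff (hf : Differentiable ℝ f) (hf₀ : ∀ p, f p ≠ 0) :
    I * Dt (fun q => ((1 / f q : ℝ) : ℂ)) p
        - I * (1 / f p : ℝ) * (g₁ p - g₁₃ p - I * (v p : ℂ) + (γ p : ℂ))
        - Dx (Dx (fun q => (f q : ℂ) * (1 / f q : ℝ))) p
        + 2 * (f₁ p - f₇ p) * Dx (fun q => ((1 / f q : ℝ) : ℂ) * (f q : ℂ)) p
        - (f p : ℂ) * (1 / f p : ℝ) * (f₁ p - f₇ p) ^ 2
        + (f p : ℂ) * (1 / f p : ℝ) * Dx (fun q => f₁ q - f₇ q) p = 0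
      ↔ g₁ p - g₁₃ p = timeCoeff f v γ (fun q => f₁ q - f₇ q) p := by
  have hfC (q : ℝ × ℝ) : (f q : ℂ) ≠ 0 := ofReal_ne_zero.2 (hf₀ q)
  have hp₁ : Dt (fun q => ((1 / f q : ℝ) : ℂ)) = fun q => ((-Dt f q / f q ^ 2 : ℝ) : ℂ) := by
    simp (disch := first | fun_prop (disch := assumption) | assumption) only
      [Dt_ofReal, Dt_div, Dt_const, zero_mul, one_mul, zero_sub]
  have hfp₁ (q : ℝ × ℝ) : (f q : ℂ) * (1 / f q : ℝ) = 1 := by simp [hfC q]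
  have hp₁f (q : ℝ × ℝ) : ((1 / f q : ℝ) : ℂ) * f q = 1 := by simp [hfC q]
  calc
    _ ↔ -I / f p * (g₁ p - g₁₃ p - timeCoeff f v γ (fun q => f₁ q - f₇ q) p) = 0 := by
      refine Eq.congr_left ?_
      simp only [hp₁, hfp₁, hp₁f, Dx_const, timeCoeff]
      push_cast
      field_simp [hfC p]
      linear_combination f p ^ 2 * (Dx (fun q => f₁ q - f₇ q) p - (f₁ p - f₇ p) ^ 2) * I_sq
    _ ↔ _ := by
      rw [mul_eq_zero_iff_left (div_ne_zero (neg_ne_zero.2 I_ne_zero) (hfC p)), sub_eq_zero]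

theorem kc4_iff_of_sub_eq_timeCoeff (hf : ContDiff ℝ (⊤ : ℕ∞) f) (hg : ContDiff ℝ (⊤ : ℕ∞) g)
    (hf₀ : f p ≠ 0) (hg₁ : g₁ p - g₁₃ p = timeCoeff f v γ (fun q => f₁ q - f₇ q) p) :
    I * Dt (fun q => ((-(1 / 2) * g q : ℝ) : ℂ)) p
        + I * (-(1 / 2) * g p : ℝ) * (g₁ p - g₁₃ p - I * (v p : ℂ) - (γ p : ℂ))
        + Dx (Dx (fun q => (f q : ℂ) * (-(1 / 2) * g q : ℝ))) p
        + 2 * (f₁ p - f₇ p) * Dx (fun q => (f q : ℂ) * (-(1 / 2) * g q : ℝ)) p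
        + (f₁ p - f₇ p) ^ 2 * (f p : ℂ) * (-(1 / 2) * g p : ℝ)
        + (f p : ℂ) * (-(1 / 2) * g p : ℝ) * Dx (fun q => f₁ q - f₇ q) p = 0
      ↔ I * (Dt g p - g p * Dt f p / f p - 2 * γ p * g p : ℝ)
        + (Dx (Dx fun q => f q * g q) p : ℝ)
        + 2 * (f₁ p - f₇ p) * (Dx (fun q => f q * g q) p : ℝ)
        + 2 * (f p * g p : ℝ) * Dx (fun q => f₁ q - f₇ q) p = 0 := by
  have hfC : (f p : ℂ) ≠ 0 := ofReal_ne_zero.2 hf₀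
  have hfp₂ : (fun q => (f q : ℂ) * (-(1 / 2) * g q : ℝ)) =
      fun q => ((-(1 / 2) * (f q * g q) : ℝ) : ℂ) := by
    ext q
    push_cast
    ring
  calc
    _ ↔ -(1 / 2 : ℂ) * (I * (Dt g p - g p * Dt f p / f p - 2 * γ p * g p : ℝ)
        + (Dx (Dx fun q => f q * g q) p : ℝ)
        + 2 * (f₁ p - f₇ p) * (Dx (fun q => f q * g q) p : ℝ)
        + 2 * (f p * g p : ℝ) * Dx (fun q => f₁ q - f₇ q) p) = 0 := by
      refine Eq.congr_left ?_
      simp (disch := fun_prop (disch := simp)) only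
        [hfp₂, hg₁, timeCoeff, Dx_ofReal, Dt_ofReal, Dx_const_mul, Dt_const_mul]
      push_cast
      field_simp
      linear_combination
        g p * f p ^ 2 * (Dx (fun q => f₁ q - f₇ q) p - (f₁ p - f₇ p) ^ 2) * I_sq
    _ ↔ _ := by
      rw [mul_eq_zero_iff_left (by norm_num)]

theorem kc5_of_mul_Dx_eq (hf₀ : ∀ p, f p ≠ 0) (hg : Differentiable ℝ g)
    (hfg : g p * Dx f p = -(2 * f p * Dx g p)) :
    (Complex.ofReal (Dx f p)) * (1 / f p : ℝ) * (-(1 / 2) * g p : ℝ)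
      + 2 * Dx (fun q => (f q : ℂ) * (1 / f q : ℝ) * (-(1 / 2) * g q : ℝ)) p = 0 := by
  have hfC (q : ℝ × ℝ) : (f q : ℂ) ≠ 0 := ofReal_ne_zero.2 (hf₀ q)
  have hfpp : (fun q => (f q : ℂ) * (1 / f q : ℝ) * (-(1 / 2) * g q : ℝ)) =
      fun q => ((-(1 / 2) * g q : ℝ) : ℂ) := by
    ext q
    simp [hfC q]
  have hfgC : (g p : ℂ) * (Dx f p : ℝ) = -(2 * f p * (Dx g p : ℝ)) := mod_cast hfg
  simp (disch := fun_prop) only [hfpp, Dx_ofReal, Dx_const_mul]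
  push_cast
  field_simp [hfC p]
  linear_combination -hfgC

theorem kc6_of_ne_zero (hf₀ : f p ≠ 0) :
    (g p : ℂ) + 2 * (f p : ℂ) * (1 / f p : ℝ) * (-(1 / 2) * g p : ℝ) = 0 := by
  have hfC : (f p : ℂ) ≠ 0 := ofReal_ne_zero.2 hf₀
  push_cast
  field_simp
  ring

end ReciprocalAnsatz

section NLSCoefficients

variable (g v : ℝ × ℝ → ℝ) (c₁ c₂ : ℝ → ℝ)

/-- The coefficient `f = c₁(t)/g²`, the general solution of (KC5) and (KC6) with `p₁ = 1/f`. -/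
noncomputable def dispersion : ℝ × ℝ → ℝ := fun p => c₁ p.2 / g p ^ 2

/-- The coefficient `γ = g_t/g − c₂'/(2c₂)`. -/
noncomputable def gain : ℝ × ℝ → ℝ := fun p => Dt g p / g p - (1 / 2) * deriv c₂ p.2 / c₂ p.2

/-- Half the logarithmic `x`-derivative of `g`; it is the real part of `f₁`. -/
noncomputable def halfLogDx : ℝ × ℝ → ℝ := fun p => Dx g p / (2 * g p)

/-- Half the logarithmic `t`-derivative of `g/c₁`; it is the real part of `g₁`. -/
noncomputable def halfLogDt : ℝ × ℝ → ℝ := fun p =>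
  (Dt g p / g p - deriv c₁ p.2 / c₁ p.2) / 2

/-- The quantum potential `f φ_xx/φ` of the amplitude `φ = |g|^(-1/2)`, expanded in terms of `g`. -/
noncomputable def quantumPotential : ℝ × ℝ → ℝ := fun p =>
  c₁ p.2 * (3 / 4 * Dx g p ^ 2 / g p ^ 4 - 1 / 2 * Dx (Dx g) p / g p ^ 3)

/-- The coefficient `f₁ = g_x/(2g) + i ξ`, taken with `f₇ = 0`. -/
noncomputable def spatialCoeff (ξ : ℝ × ℝ → ℝ) : ℝ × ℝ → ℂ := fun p => halfLogDx g p + I * ξ p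

/-- The `x`-derivative that (KC4) prescribes for the flux `f g ξ`, where `ξ = Im f₁`. -/
noncomputable def fluxSource : ℝ × ℝ → ℝ := fun p =>
  -(1 / 2) * (Dt g p + (deriv c₂ p.2 / c₂ p.2 - deriv c₁ p.2 / c₁ p.2) * g p)

/-- The real system for `ξ = Im f₁` left over from (KC1)–(KC4): `Dx_eq` is the imaginary part of
(KC4), and `Dt_eq`, the imaginary part of (KC1), is a Hamilton–Jacobi equation differentiated in
`x`. -/
structure IsPhaseGradient (ξ : ℝ × ℝ → ℝ) : Prop where
  contDiff : ContDiff ℝ (⊤ : ℕ∞) ξ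
  Dx_eq : Dx ξ = fun p => g p / c₁ p.2 * fluxSource g c₁ c₂ p + ξ p * Dx g p / g p
  Dt_eq : Dt ξ = Dx fun p => v p + quantumPotential g c₁ p - dispersion g c₁ p * ξ p ^ 2

/-- The left-hand side of the integrability condition. -/
noncomputable def integrabilityDefect (f γ : ℝ × ℝ → ℝ) : ℝ × ℝ → ℝ := fun p =>
  f p * (g p) ^ 3 * (Dt f p * (Dt g p - 2 * g p * γ p) - Dt (Dt f) p * g p)
    + (Dt f p) ^ 2 * (g p) ^ 4
    + 2 * (f p) ^ 3 * (g p) ^ 3 * (g p * Dx (Dx v) p - Dx g p * Dx v p)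
    + (f p) ^ 2 * (g p) ^ 2
        * (g p * (4 * Dt g p * γ p + Dt (Dt g) p) - 2 * (Dt g p) ^ 2
          - 2 * (g p) ^ 2 * (Dt γ p + 2 * (γ p) ^ 2))
    + (f p) ^ 4
        * (36 * (Dx g p) ^ 4 - 48 * g p * Dx (Dx g) p * (Dx g p) ^ 2
          + 10 * (g p) ^ 2 * Dx (Dx (Dx g)) p * Dx g p
          + (g p) ^ 2 * (6 * (Dx (Dx g) p) ^ 2 - g p * Dx (Dx (Dx (Dx g))) p))

variable {g v c₁ c₂} {ξ : ℝ × ℝ → ℝ} {p : ℝ × ℝ}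

theorem contDiff_dispersion (hg : ContDiff ℝ (⊤ : ℕ∞) g) (hc₁ : ContDiff ℝ (⊤ : ℕ∞) c₁)
    (hg₀ : ∀ p, g p ≠ 0) : ContDiff ℝ (⊤ : ℕ∞) (dispersion g c₁) := by
  unfold dispersion
  fun_prop (disch := simp [hg₀])

theorem dispersion_ne_zero (hg₀ : g p ≠ 0) (hc₁₀ : c₁ p.2 ≠ 0) : dispersion g c₁ p ≠ 0 :=
  div_ne_zero hc₁₀ (pow_ne_zero 2 hg₀)

theorem contDiff_quantumPotential (hg : ContDiff ℝ (⊤ : ℕ∞) g) (hc₁ : ContDiff ℝ (⊤ : ℕ∞) c₁)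
    (hg₀ : ∀ p, g p ≠ 0) : ContDiff ℝ (⊤ : ℕ∞) (quantumPotential g c₁) := by
  unfold quantumPotential
  fun_prop (disch := simp [hg₀])

theorem contDiff_halfLogDx (hg : ContDiff ℝ (⊤ : ℕ∞) g) (hg₀ : ∀ p, g p ≠ 0) :
    ContDiff ℝ (⊤ : ℕ∞) (halfLogDx g) := by
  unfold halfLogDx
  fun_prop (disch := simp [hg₀])

theorem contDiff_halfLogDt (hg : ContDiff ℝ (⊤ : ℕ∞) g) (hc₁ : ContDiff ℝ (⊤ : ℕ∞) c₁)
    (hg₀ : ∀ p, g p ≠ 0) (hc₁₀ : ∀ t, c₁ t ≠ 0) : ContDiff ℝ (⊤ : ℕ∞) (halfLogDt g c₁) := by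
  unfold halfLogDt
  fun_prop (disch := simp [hc₁₀])

theorem contDiff_fluxSource (hg : ContDiff ℝ (⊤ : ℕ∞) g) (hc₁ : ContDiff ℝ (⊤ : ℕ∞) c₁)
    (hc₂ : ContDiff ℝ (⊤ : ℕ∞) c₂) (hc₁₀ : ∀ t, c₁ t ≠ 0) (hc₂₀ : ∀ t, c₂ t ≠ 0) :
    ContDiff ℝ (⊤ : ℕ∞) (fluxSource g c₁ c₂) := by
  unfold fluxSource
  fun_prop (disch := simp [hc₁₀, hc₂₀])

theorem mul_Dx_dispersion (hg : Differentiable ℝ g) (hc₁ : Differentiable ℝ c₁)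
    (hg₀ : ∀ p, g p ≠ 0) (p : ℝ × ℝ) :
    g p * Dx (dispersion g c₁) p = -(2 * dispersion g c₁ p * Dx g p) := by
  unfold dispersion
  simp (disch := first | fun_prop (disch := simp [hg₀]) | simp [hg₀]) only
    [Dx_div, Dx_comp_snd, Dx_pow]
  field [hg₀ p]

theorem Dt_dispersion (hg : Differentiable ℝ g) (hc₁ : Differentiable ℝ c₁)
    (hg₀ : ∀ p, g p ≠ 0) :
    Dt (dispersion g c₁) =
      fun p => deriv c₁ p.2 / g p ^ 2 - 2 * dispersion g c₁ p * Dt g p / g p := by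
  unfold dispersion
  simp (disch := first | fun_prop (disch := simp [hg₀]) | simp [hg₀]) only
    [Dt_div, Dt_comp_snd, Dt_pow]
  ext p
  field [hg₀ p]

theorem Dx_dispersion_mul (hg : Differentiable ℝ g) (hc₁ : Differentiable ℝ c₁)
    (hg₀ : ∀ p, g p ≠ 0) :
    Dx (fun p => dispersion g c₁ p * g p) = fun p => -(c₁ p.2 * Dx g p / g p ^ 2) := by
  have hmul (p : ℝ × ℝ) : dispersion g c₁ p * g p = c₁ p.2 / g p := by
    unfold dispersion
    field [hg₀ p]
  simp (disch := first | fun_prop | exact hg₀) only [hmul, Dx_div, Dx_comp_snd]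
  ext p
  ring

theorem Dx_Dx_dispersion_mul (hg : ContDiff ℝ (⊤ : ℕ∞) g) (hc₁ : ContDiff ℝ (⊤ : ℕ∞) c₁)
    (hg₀ : ∀ p, g p ≠ 0) :
    Dx (Dx fun p => dispersion g c₁ p * g p) =
      fun p => c₁ p.2 * (2 * Dx g p ^ 2 / g p ^ 3 - Dx (Dx g) p / g p ^ 2) := by
  rw [Dx_dispersion_mul (hg.differentiable (by simp)) (hc₁.differentiable (by simp)) hg₀]
  simp (disch := first | fun_prop (disch := simp [hg₀]) | simp [hg₀]) only
    [Dx_neg, Dx_div, Dx_mul, Dx_pow, Dx_comp_snd]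
  ext p
  field [hg₀ p]

theorem Dx_halfLogDx (hg : ContDiff ℝ (⊤ : ℕ∞) g) (hg₀ : ∀ p, g p ≠ 0) :
    Dx (halfLogDx g) = fun p => (Dx (Dx g) p / g p - Dx g p ^ 2 / g p ^ 2) / 2 := by
  unfold halfLogDx
  simp (disch := first | fun_prop (disch := simp) | simp [hg₀]) only [Dx_div, Dx_const_mul]
  ext p
  field [hg₀ p]

theorem Dt_halfLogDx_eq_Dx_halfLogDt (hg : ContDiff ℝ (⊤ : ℕ∞) g)
    (hc₁ : ContDiff ℝ (⊤ : ℕ∞) c₁) (hg₀ : ∀ p, g p ≠ 0) (hc₁₀ : ∀ t, c₁ t ≠ 0) :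
    Dt (halfLogDx g) = Dx (halfLogDt g c₁) := by
  have hc₁' : ContDiff ℝ (⊤ : ℕ∞) (deriv c₁) := by fun_prop
  have hcomm := congrFun (Dt_Dx_comm (mod_cast contDiff_infty.1 hg 2))
  unfold halfLogDx halfLogDt
  simp (disch := first | fun_prop (disch := simp [hg₀, hc₁₀]) | simp [hg₀, hc₁₀]) only
    [Dx_div, Dt_div, Dx_sub, Dt_const_mul, Dx_comp_snd, Dx_const]
  ext p
  rw [hcomm]
  field [hg₀ p, hc₁₀ p.2]

theorem contDiff_spatialCoeff (hg : ContDiff ℝ (⊤ : ℕ∞) g) (hg₀ : ∀ p, g p ≠ 0)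
    (hξ : ContDiff ℝ (⊤ : ℕ∞) ξ) : ContDiff ℝ (⊤ : ℕ∞) (spatialCoeff g ξ) := by
  have hre := contDiff_halfLogDx hg hg₀
  unfold spatialCoeff
  fun_prop

theorem Dx_spatialCoeff (hg : ContDiff ℝ (⊤ : ℕ∞) g) (hg₀ : ∀ p, g p ≠ 0)
    (hξ : Differentiable ℝ ξ) :
    Dx (spatialCoeff g ξ) =
      fun p => ((Dx (halfLogDx g) p : ℝ) : ℂ) + I * ((Dx ξ p : ℝ) : ℂ) :=
  Dx_ofReal_add_I_mul ((contDiff_halfLogDx hg hg₀).differentiable (by simp)) hξ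

theorem dispersion_mul_halfLogDx_sq_sub (hg : ContDiff ℝ (⊤ : ℕ∞) g) (hg₀ : ∀ p, g p ≠ 0)
    (p : ℝ × ℝ) :
    dispersion g c₁ p * (halfLogDx g p ^ 2 - Dx (halfLogDx g) p) = quantumPotential g c₁ p := by
  rw [Dx_halfLogDx hg hg₀]
  unfold dispersion halfLogDx quantumPotential
  field [hg₀ p]

theorem IsPhaseGradient.halfLogDt_eq (hξ : IsPhaseGradient g v c₁ c₂ ξ)
    (hg : Differentiable ℝ g) (hc₁ : Differentiable ℝ c₁) (hg₀ : ∀ p, g p ≠ 0)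
    (hc₁₀ : ∀ t, c₁ t ≠ 0) (p : ℝ × ℝ) :
    halfLogDt g c₁ p = -(Dt (dispersion g c₁) p / dispersion g c₁ p + gain g c₂ p)
      - dispersion g c₁ p * (2 * halfLogDx g p * ξ p - Dx ξ p) := by
  rw [hξ.Dx_eq, Dt_dispersion hg hc₁ hg₀]
  unfold dispersion gain halfLogDx halfLogDt fluxSource
  field [hg₀ p, hc₁₀ p.2]

theorem IsPhaseGradient.timeCoeff_spatialCoeff (hξ : IsPhaseGradient g v c₁ c₂ ξ)
    (hg : ContDiff ℝ (⊤ : ℕ∞) g) (hc₁ : Differentiable ℝ c₁) (hg₀ : ∀ p, g p ≠ 0)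
    (hc₁₀ : ∀ t, c₁ t ≠ 0) :
    timeCoeff (dispersion g c₁) v (gain g c₂) (spatialCoeff g ξ) =
      fun p => (halfLogDt g c₁ p : ℂ) +
        I * (v p + quantumPotential g c₁ p - dispersion g c₁ p * ξ p ^ 2 : ℝ) := by
  ext p
  have hre := congrArg ofReal (hξ.halfLogDt_eq (hg.differentiable (by simp)) hc₁ hg₀ hc₁₀ p)
  have him := congrArg ofReal (dispersion_mul_halfLogDx_sq_sub (c₁ := c₁) hg hg₀ p)
  simp only [timeCoeff, Dx_spatialCoeff hg hg₀ (hξ.contDiff.differentiable (by simp)),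
    spatialCoeff]
  push_cast at hre him ⊢
  linear_combination -hre + I * him + dispersion g c₁ p *
    (2 * halfLogDx g p * ξ p - (Dx ξ p : ℝ) + I * ξ p ^ 2) * I_sq

theorem IsPhaseGradient.contDiff_timeCoeff (hξ : IsPhaseGradient g v c₁ c₂ ξ)
    (hg : ContDiff ℝ (⊤ : ℕ∞) g) (hv : ContDiff ℝ (⊤ : ℕ∞) v)
    (hc₁ : ContDiff ℝ (⊤ : ℕ∞) c₁) (hg₀ : ∀ p, g p ≠ 0) (hc₁₀ : ∀ t, c₁ t ≠ 0) :
    ContDiff ℝ (⊤ : ℕ∞) (timeCoeff (dispersion g c₁) v (gain g c₂) (spatialCoeff g ξ)) := by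
  have hf := contDiff_dispersion hg hc₁ hg₀
  have hS := contDiff_quantumPotential hg hc₁ hg₀
  have hre := contDiff_halfLogDt hg hc₁ hg₀ hc₁₀
  have hξ' := hξ.contDiff
  rw [hξ.timeCoeff_spatialCoeff hg (hc₁.differentiable (by simp)) hg₀ hc₁₀]
  fun_prop

theorem IsPhaseGradient.Dt_spatialCoeff_eq_Dx_timeCoeff (hξ : IsPhaseGradient g v c₁ c₂ ξ)
    (hg : ContDiff ℝ (⊤ : ℕ∞) g) (hv : Differentiable ℝ v)
    (hc₁ : ContDiff ℝ (⊤ : ℕ∞) c₁) (hg₀ : ∀ p, g p ≠ 0) (hc₁₀ : ∀ t, c₁ t ≠ 0) :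
    Dt (spatialCoeff g ξ) =
      Dx (timeCoeff (dispersion g c₁) v (gain g c₂) (spatialCoeff g ξ)) := by
  have hf := contDiff_dispersion hg hc₁ hg₀
  have hS := contDiff_quantumPotential hg hc₁ hg₀
  have hre := contDiff_halfLogDx hg hg₀
  have hre' := contDiff_halfLogDt hg hc₁ hg₀ hc₁₀
  have hξ' := hξ.contDiff
  rw [hξ.timeCoeff_spatialCoeff hg (hc₁.differentiable (by simp)) hg₀ hc₁₀,
    Dx_ofReal_add_I_mul (by fun_prop (disch := simp)) (by fun_prop (disch := simp)),
    ← hξ.Dt_eq, ← Dt_halfLogDx_eq_Dx_halfLogDt hg hc₁ hg₀ hc₁₀]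
  exact Dt_ofReal_add_I_mul (by fun_prop (disch := simp)) (by fun_prop (disch := simp))

theorem kc4_re_halfLogDx (hg : ContDiff ℝ (⊤ : ℕ∞) g)
    (hc₁ : ContDiff ℝ (⊤ : ℕ∞) c₁) (hg₀ : ∀ p, g p ≠ 0) (p : ℝ × ℝ) :
    Dx (Dx fun q => dispersion g c₁ q * g q) p
      + 2 * halfLogDx g p * Dx (fun q => dispersion g c₁ q * g q) p
      + 2 * (dispersion g c₁ p * g p) * Dx (halfLogDx g) p = 0 := by
  rw [Dx_Dx_dispersion_mul hg hc₁ hg₀, Dx_halfLogDx hg hg₀,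
    Dx_dispersion_mul (hg.differentiable (by simp)) (hc₁.differentiable (by simp)) hg₀]
  unfold dispersion halfLogDx
  field [hg₀ p]

theorem IsPhaseGradient.kc4_im (hξ : IsPhaseGradient g v c₁ c₂ ξ)
    (hg : Differentiable ℝ g) (hc₁ : Differentiable ℝ c₁) (hg₀ : ∀ p, g p ≠ 0)
    (hc₁₀ : ∀ t, c₁ t ≠ 0) (p : ℝ × ℝ) :
    (Dt g p - g p * Dt (dispersion g c₁) p / dispersion g c₁ p - 2 * gain g c₂ p * g p)
      + 2 * ξ p * Dx (fun q => dispersion g c₁ q * g q) p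
      + 2 * (dispersion g c₁ p * g p) * Dx ξ p = 0 := by
  rw [Dt_dispersion hg hc₁ hg₀, Dx_dispersion_mul hg hc₁ hg₀, hξ.Dx_eq]
  unfold dispersion gain fluxSource
  field [hg₀ p, hc₁₀ p.2]

theorem IsPhaseGradient.kc4 (hξ : IsPhaseGradient g v c₁ c₂ ξ)
    (hg : ContDiff ℝ (⊤ : ℕ∞) g) (hc₁ : ContDiff ℝ (⊤ : ℕ∞) c₁)
    (hg₀ : ∀ p, g p ≠ 0) (hc₁₀ : ∀ t, c₁ t ≠ 0) (p : ℝ × ℝ) :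
    I * (Dt g p - g p * Dt (dispersion g c₁) p / dispersion g c₁ p - 2 * gain g c₂ p * g p : ℝ)
      + (Dx (Dx fun q => dispersion g c₁ q * g q) p : ℝ)
      + 2 * spatialCoeff g ξ p * (Dx (fun q => dispersion g c₁ q * g q) p : ℝ)
      + 2 * (dispersion g c₁ p * g p : ℝ) * Dx (spatialCoeff g ξ) p = 0 := by
  have hre := congrArg ofReal (kc4_re_halfLogDx hg hc₁ hg₀ p)
  have him := congrArg ofReal (hξ.kc4_im (hg.differentiable (by simp))
    (hc₁.differentiable (by simp)) hg₀ hc₁₀ p)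
  rw [Dx_spatialCoeff hg hg₀ (hξ.contDiff.differentiable (by simp))]
  unfold spatialCoeff
  push_cast at hre him ⊢
  linear_combination hre + I * him

theorem Dt_Dt_dispersion (hg : ContDiff ℝ (⊤ : ℕ∞) g) (hc₁ : ContDiff ℝ (⊤ : ℕ∞) c₁)
    (hg₀ : ∀ p, g p ≠ 0) :
    Dt (Dt (dispersion g c₁)) = fun p =>
      deriv (deriv c₁) p.2 / g p ^ 2 - 4 * deriv c₁ p.2 * Dt g p / g p ^ 3
        + c₁ p.2 * (6 * Dt g p ^ 2 / g p ^ 4 - 2 * Dt (Dt g) p / g p ^ 3) := by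
  rw [Dt_dispersion (hg.differentiable (by simp)) (hc₁.differentiable (by simp)) hg₀]
  have hc₁' : ContDiff ℝ (⊤ : ℕ∞) (deriv c₁) := by fun_prop
  unfold dispersion
  simp (disch := first | fun_prop (disch := simp [hg₀]) | simp [hg₀]) only
    [Dt_sub, Dt_div, Dt_mul, Dt_const, Dt_pow, Dt_comp_snd]
  ext p
  push_cast
  field [hg₀ p]

theorem Dt_gain (hg : ContDiff ℝ (⊤ : ℕ∞) g) (hc₂ : ContDiff ℝ (⊤ : ℕ∞) c₂)
    (hg₀ : ∀ p, g p ≠ 0) (hc₂₀ : ∀ t, c₂ t ≠ 0) :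
    Dt (gain g c₂) = fun p =>
      Dt (Dt g) p / g p - Dt g p ^ 2 / g p ^ 2
        - 1 / 2 * (deriv (deriv c₂) p.2 / c₂ p.2 - deriv c₂ p.2 ^ 2 / c₂ p.2 ^ 2) := by
  have hc₂' : ContDiff ℝ (⊤ : ℕ∞) (deriv c₂) := by fun_prop
  unfold gain
  simp (disch := first | fun_prop (disch := simp [hg₀, hc₂₀]) | simp [hg₀, hc₂₀]) only
    [Dt_sub, Dt_div, Dt_const_mul, Dt_comp_snd]
  ext p
  field [hg₀ p, hc₂₀ p.2]

theorem Dt_fluxSource_div (hg : ContDiff ℝ (⊤ : ℕ∞) g) (hc₁ : ContDiff ℝ (⊤ : ℕ∞) c₁)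
    (hc₂ : ContDiff ℝ (⊤ : ℕ∞) c₂) (hc₁₀ : ∀ t, c₁ t ≠ 0) (hc₂₀ : ∀ t, c₂ t ≠ 0) :
    Dt (fun q => fluxSource g c₁ c₂ q / c₂ q.2) = fun p =>
      -(1 / 2) / c₂ p.2 * (Dt (Dt g) p - deriv c₁ p.2 / c₁ p.2 * Dt g p
        + (deriv (deriv c₂) p.2 / c₂ p.2 - 2 * deriv c₂ p.2 ^ 2 / c₂ p.2 ^ 2
          - deriv (deriv c₁) p.2 / c₁ p.2 + deriv c₁ p.2 ^ 2 / c₁ p.2 ^ 2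
          + deriv c₁ p.2 * deriv c₂ p.2 / (c₁ p.2 * c₂ p.2)) * g p) := by
  have hc₁' : ContDiff ℝ (⊤ : ℕ∞) (deriv c₁) := by fun_prop
  have hc₂' : ContDiff ℝ (⊤ : ℕ∞) (deriv c₂) := by fun_prop
  unfold fluxSource
  simp (disch := first | fun_prop (disch := simp [hc₁₀, hc₂₀]) | simp [hc₁₀, hc₂₀]) only
    [Dt_add, Dt_sub, Dt_div, Dt_mul, Dt_const, Dt_comp_snd]
  ext p
  field [hc₁₀ p.2, hc₂₀ p.2]

theorem Dx_quantumPotential (hg : ContDiff ℝ (⊤ : ℕ∞) g) (hc₁ : ContDiff ℝ (⊤ : ℕ∞) c₁)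
    (hg₀ : ∀ p, g p ≠ 0) :
    Dx (quantumPotential g c₁) = fun p =>
      c₁ p.2 * (3 * Dx g p * Dx (Dx g) p / g p ^ 4 - 3 * Dx g p ^ 3 / g p ^ 5
        - 1 / 2 * Dx (Dx (Dx g)) p / g p ^ 3) := by
  unfold quantumPotential
  simp (disch := first | fun_prop (disch := simp [hg₀]) | simp [hg₀]) only
    [Dx_sub, Dx_div, Dx_mul, Dx_const, Dx_pow, Dx_comp_snd]
  ext p
  push_cast
  field [hg₀ p]

theorem Dx_Dx_quantumPotential (hg : ContDiff ℝ (⊤ : ℕ∞) g) (hc₁ : ContDiff ℝ (⊤ : ℕ∞) c₁)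
    (hg₀ : ∀ p, g p ≠ 0) :
    Dx (Dx (quantumPotential g c₁)) = fun p =>
      c₁ p.2 * (3 * Dx (Dx g) p ^ 2 / g p ^ 4 + 9 / 2 * Dx g p * Dx (Dx (Dx g)) p / g p ^ 4
        - 21 * Dx g p ^ 2 * Dx (Dx g) p / g p ^ 5 + 15 * Dx g p ^ 4 / g p ^ 6
        - 1 / 2 * Dx (Dx (Dx (Dx g))) p / g p ^ 3) := by
  rw [Dx_quantumPotential hg hc₁ hg₀]
  simp (disch := first | fun_prop (disch := simp [hg₀]) | simp [hg₀]) only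
    [Dx_sub, Dx_div, Dx_mul, Dx_const, Dx_pow, Dx_comp_snd]
  ext p
  push_cast
  field [hg₀ p]

theorem Dx_div_mul_Dx (hg : ContDiff ℝ (⊤ : ℕ∞) g) (hc₁ : Differentiable ℝ c₁)
    (hc₂ : Differentiable ℝ c₂) (hg₀ : ∀ p, g p ≠ 0) (hc₂₀ : ∀ t, c₂ t ≠ 0)
    {w : ℝ × ℝ → ℝ} (hw : ContDiff ℝ (⊤ : ℕ∞) w) :
    Dx (fun q => c₁ q.2 / (c₂ q.2 * g q) * Dx w q) =
      fun p => c₁ p.2 / (c₂ p.2 * g p) * (Dx (Dx w) p - Dx g p / g p * Dx w p) := by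
  simp (disch := first | fun_prop (disch := simp [hg₀, hc₂₀]) | simp [hg₀, hc₂₀]) only
    [Dx_div, Dx_mul, Dx_comp_snd]
  ext p
  field [hg₀ p, hc₂₀ p.2]

theorem integrabilityDefect_eq (hg : ContDiff ℝ (⊤ : ℕ∞) g) (hv : ContDiff ℝ (⊤ : ℕ∞) v)
    (hc₁ : ContDiff ℝ (⊤ : ℕ∞) c₁) (hc₂ : ContDiff ℝ (⊤ : ℕ∞) c₂) (hg₀ : ∀ p, g p ≠ 0)
    (hc₁₀ : ∀ t, c₁ t ≠ 0) (hc₂₀ : ∀ t, c₂ t ≠ 0) (p : ℝ × ℝ) :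
    integrabilityDefect g v (dispersion g c₁) (gain g c₂) p =
      2 * c₁ p.2 ^ 2 * c₂ p.2 / g p *
        (Dx (fun q => c₁ q.2 / (c₂ q.2 * g q) * Dx (fun r => v r + quantumPotential g c₁ r) q) p
          - Dt (fun q => fluxSource g c₁ c₂ q / c₂ q.2) p) := by
  have hDtf := Dt_dispersion (hg.differentiable (by simp)) (hc₁.differentiable (by simp)) hg₀
  have hS := contDiff_quantumPotential hg hc₁ hg₀
  have hDxvS : Dx (fun q => v q + quantumPotential g c₁ q) =
      fun q => Dx v q + Dx (quantumPotential g c₁) q := by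
    simp (disch := fun_prop (disch := simp)) only [Dx_add]
  have hDxDxvS : Dx (Dx fun q => v q + quantumPotential g c₁ q) =
      fun q => Dx (Dx v) q + Dx (Dx (quantumPotential g c₁)) q := by
    simp (disch := fun_prop (disch := simp)) only [Dx_add]
  rw [Dx_div_mul_Dx hg (hc₁.differentiable (by simp)) (hc₂.differentiable (by simp)) hg₀ hc₂₀
      (hv.add hS), hDxDxvS, hDxvS, Dx_Dx_quantumPotential hg hc₁ hg₀,
    Dx_quantumPotential hg hc₁ hg₀, Dt_fluxSource_div hg hc₁ hc₂ hc₁₀ hc₂₀]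
  simp only [integrabilityDefect]
  rw [Dt_Dt_dispersion hg hc₁ hg₀, hDtf, Dt_gain hg hc₂ hg₀ hc₂₀]
  unfold dispersion gain
  field [hg₀ p, hc₁₀ p.2, hc₂₀ p.2]

theorem exists_isPhaseGradient (hg : ContDiff ℝ (⊤ : ℕ∞) g) (hv : ContDiff ℝ (⊤ : ℕ∞) v)
    (hc₁ : ContDiff ℝ (⊤ : ℕ∞) c₁) (hc₂ : ContDiff ℝ (⊤ : ℕ∞) c₂) (hg₀ : ∀ p, g p ≠ 0)
    (hc₁₀ : ∀ t, c₁ t ≠ 0) (hc₂₀ : ∀ t, c₂ t ≠ 0)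
    (hdefect : ∀ p, integrabilityDefect g v (dispersion g c₁) (gain g c₂) p = 0) :
    ∃ ξ, IsPhaseGradient g v c₁ c₂ ξ := by
  have hS := contDiff_quantumPotential hg hc₁ hg₀
  have hf := contDiff_dispersion hg hc₁ hg₀
  have hs := contDiff_fluxSource hg hc₁ hc₂ hc₁₀ hc₂₀
  have hclosed : Dt (fun q => fluxSource g c₁ c₂ q / c₂ q.2) =
      Dx fun q => c₁ q.2 / (c₂ q.2 * g q) * Dx (fun r => v r + quantumPotential g c₁ r) q := by
    ext p
    have hp := hdefect p
    rw [integrabilityDefect_eq hg hv hc₁ hc₂ hg₀ hc₁₀ hc₂₀,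
      mul_eq_zero_iff_left (by simp [hg₀, hc₁₀, hc₂₀])] at hp
    exact (sub_eq_zero.1 hp).symm
  obtain ⟨U, hU, hUx, hUt⟩ := exists_Dx_eq_Dt_eq (by fun_prop (disch := simp [hc₂₀]))
    (by fun_prop (disch := simp [hc₂₀, hg₀])) hclosed
  -- `c₁/(c₂ g)` is an integrating factor: it turns the system for `ξ` into one for its potential.
  refine ⟨fun p => c₂ p.2 * g p * U p / c₁ p.2, by fun_prop (disch := simp [hc₁₀]), ?_, ?_⟩
  · simp (disch := first | fun_prop (disch := simp [hc₁₀]) | simp [hc₁₀]) only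
      [Dx_div, Dx_mul, Dx_comp_snd, hUx]
    ext p
    field [hg₀ p, hc₁₀ p.2, hc₂₀ p.2]
  · have hflux : (fun p => dispersion g c₁ p * (c₂ p.2 * g p * U p / c₁ p.2) ^ 2) =
        fun p => c₂ p.2 ^ 2 / c₁ p.2 * U p ^ 2 := by
      ext p
      unfold dispersion
      field [hg₀ p, hc₁₀ p.2]
    rw [Dx_sub (by fun_prop (disch := simp)) (by fun_prop (disch := simp [hc₁₀])), hflux]
    simp (disch := first | fun_prop (disch := simp [hc₁₀]) | simp [hc₁₀]) only
      [Dt_div, Dt_mul, Dt_comp_snd, Dx_div, Dx_mul, Dx_pow, Dx_comp_snd, hUx, hUt]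
    ext p
    unfold fluxSource
    field [hg₀ p, hc₁₀ p.2, hc₂₀ p.2]

end NLSCoefficients

/-- If the coefficients `f = c₁(t)/g²` and `γ = g_t/g − (1/2) c₂'(t)/c₂(t)` satisfy
the stated integrability condition, then the determining equations (KC1)-(KC6) for a
Lax pair of the variable-coefficient NLS equation
`i q_t + f q_xx + g |q|² q + v q + i γ q = 0` admit smooth solutions
`p₁, p₂, f₁, f₇, g₁, g₁₃`, i.e. the equation is Lax-integrable. -/
theorem vcNLS_lax_integrable (g v : ℝ × ℝ → ℝ) (c₁ c₂ : ℝ → ℝ)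
    (hg : ContDiff ℝ (⊤ : ℕ∞) g) (hv : ContDiff ℝ (⊤ : ℕ∞) v)
    (hc₁ : ContDiff ℝ (⊤ : ℕ∞) c₁) (hc₂ : ContDiff ℝ (⊤ : ℕ∞) c₂)
    (hgne : ∀ p : ℝ × ℝ, g p ≠ 0)
    (hc₁ne : ∀ t : ℝ, c₁ t ≠ 0) (hc₂ne : ∀ t : ℝ, c₂ t ≠ 0)
    (f γ : ℝ × ℝ → ℝ)
    (hf : f = fun p => c₁ p.2 / (g p) ^ 2)
    (hγ : γ = fun p => Dt g p / g p - (1 / 2) * deriv c₂ p.2 / c₂ p.2)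
    (hcond : ∀ p : ℝ × ℝ,
      f p * (g p) ^ 3 * (Dt f p * (Dt g p - 2 * g p * γ p) - Dt (Dt f) p * g p)
        + (Dt f p) ^ 2 * (g p) ^ 4
        + 2 * (f p) ^ 3 * (g p) ^ 3 * (g p * Dx (Dx v) p - Dx g p * Dx v p)
        + (f p) ^ 2 * (g p) ^ 2
            * (g p * (4 * Dt g p * γ p + Dt (Dt g) p) - 2 * (Dt g p) ^ 2
              - 2 * (g p) ^ 2 * (Dt γ p + 2 * (γ p) ^ 2))
        + (f p) ^ 4
            * (36 * (Dx g p) ^ 4 - 48 * g p * Dx (Dx g) p * (Dx g p) ^ 2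
              + 10 * (g p) ^ 2 * Dx (Dx (Dx g)) p * Dx g p
              + (g p) ^ 2 * (6 * (Dx (Dx g) p) ^ 2 - g p * Dx (Dx (Dx (Dx g))) p))
        = 0) :
    ∃ p₁ p₂ f₁ f₇ g₁ g₁₃ : ℝ × ℝ → ℂ,
      ContDiff ℝ (⊤ : ℕ∞) p₁ ∧ ContDiff ℝ (⊤ : ℕ∞) p₂ ∧ ContDiff ℝ (⊤ : ℕ∞) f₁ ∧ ContDiff ℝ (⊤ : ℕ∞) f₇
      ∧ ContDiff ℝ (⊤ : ℕ∞) g₁ ∧ ContDiff ℝ (⊤ : ℕ∞) g₁₃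
      ∧ ∀ p : ℝ × ℝ,
          (Dt f₁ p - Dx g₁ p = 0)
          ∧ (Dt f₇ p - Dx g₁₃ p = 0)
          ∧ (I * Dt p₁ p
              - I * p₁ p * (g₁ p - g₁₃ p - I * (v p : ℂ) + (γ p : ℂ))
              - Dx (Dx (fun p' => (f p' : ℂ) * p₁ p')) p
              + 2 * (f₁ p - f₇ p) * Dx (fun p' => p₁ p' * (f p' : ℂ)) p
              - (f p : ℂ) * p₁ p * (f₁ p - f₇ p) ^ 2
              + (f p : ℂ) * p₁ p * Dx (fun p' => f₁ p' - f₇ p') p = 0)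
          ∧ (I * Dt p₂ p
              + I * p₂ p * (g₁ p - g₁₃ p - I * (v p : ℂ) - (γ p : ℂ))
              + Dx (Dx (fun p' => (f p' : ℂ) * p₂ p')) p
              + 2 * (f₁ p - f₇ p) * Dx (fun p' => (f p' : ℂ) * p₂ p') p
              + (f₁ p - f₇ p) ^ 2 * (f p : ℂ) * p₂ p
              + (f p : ℂ) * p₂ p * Dx (fun p' => f₁ p' - f₇ p') p = 0)
          ∧ ((Complex.ofReal (Dx f p)) * p₁ p * p₂ p
              + 2 * Dx (fun p' => (f p' : ℂ) * p₁ p' * p₂ p') p = 0)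
          ∧ ((g p : ℂ) + 2 * (f p : ℂ) * p₁ p * p₂ p = 0) := by
  obtain rfl : f = dispersion g c₁ := hf
  obtain rfl : γ = gain g c₂ := hγ
  obtain ⟨ξ, hξ⟩ := exists_isPhaseGradient hg hv hc₁ hc₂ hgne hc₁ne hc₂ne hcond
  have hf := contDiff_dispersion hg hc₁ hgne
  have hf₀ (p : ℝ × ℝ) : dispersion g c₁ p ≠ 0 := dispersion_ne_zero (hgne p) (hc₁ne p.2)
  have hg' := hg.differentiable (by simp)
  have hc₁' := hc₁.differentiable (by simp)
  refine ⟨fun q => ((1 / dispersion g c₁ q : ℝ) : ℂ), fun q => ((-(1 / 2) * g q : ℝ) : ℂ),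
    spatialCoeff g ξ, fun _ => 0, timeCoeff (dispersion g c₁) v (gain g c₂) (spatialCoeff g ξ),
    fun _ => 0, by fun_prop (disch := exact hf₀), by fun_prop,
    contDiff_spatialCoeff hg hgne hξ.contDiff, contDiff_const,
    hξ.contDiff_timeCoeff hg hv hc₁ hgne hc₁ne, contDiff_const, fun p => ⟨?_, ?_, ?_, ?_,
    kc5_of_mul_Dx_eq hf₀ hg' (mul_Dx_dispersion hg' hc₁' hgne p), kc6_of_ne_zero (hf₀ p)⟩⟩
  · rw [hξ.Dt_spatialCoeff_eq_Dx_timeCoeff hg (hv.differentiable (by simp)) hc₁ hgne hc₁ne,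
      sub_self]
  · rw [Dt_const, Dx_const, sub_zero]
  · exact (kc3_iff_sub_eq_timeCoeff (f₁ := spatialCoeff g ξ) (f₇ := fun _ => 0)
      (g₁₃ := fun _ => 0) (hf.differentiable (by simp)) hf₀).2 (by simp only [sub_zero])
  · refine (kc4_iff_of_sub_eq_timeCoeff (f₁ := spatialCoeff g ξ) (f₇ := fun _ => 0)
      (g₁₃ := fun _ => 0) hf hg (hf₀ p) (by simp only [sub_zero])).2 ?_
    simpa only [sub_zero] using hξ.kc4 hg hc₁ hgne hc₁ne p
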